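/- Let n ≥ 2 be an integer and let Φ be a real symmetric n×n matrix with trace(Φ) = 0. Then |trace(Φ³)| ≤ ((n−2)/√(n(n−1)))·(trace(Φ²))^{3/2}. -/

import Mathlib

lemma okumura_upper (n : ℕ) (hn : 2 ≤ n) (x : Fin n → ℝ) (h0 : ∑ i, x i = 0) (d : ℝ)
    (hd : 0 ≤ d) (hS : ∑ i, x i ^ 2 = n * (n - 1) * d ^ 2) :
    ∑ i, x i ^ 3 ≤ ((n : ℝ) - 2) * d * ∑ i, x i ^ 2 := by
  have hn' : (2 : ℝ) ≤ n := by exact_mod_cast hn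
  have hle : ∀ i, x i ≤ (n - 1) * d := by
    intro i
    have h1 : ∑ j ∈ Finset.univ.erase i, x j = - x i := by
      have := Finset.add_sum_erase Finset.univ x (Finset.mem_univ i)
      linarith
    have h2 : ∑ j ∈ Finset.univ.erase i, x j ^ 2 = n * (n - 1) * d ^ 2 - x i ^ 2 := by
      have := Finset.add_sum_erase Finset.univ (fun j => x j ^ 2) (Finset.mem_univ i)
      linarith
    have h3 := sq_sum_le_card_mul_sum_sq (s := Finset.univ.erase i) (f := x)
    have hc : (((Finset.univ.erase i).card : ℕ) : ℝ) = n - 1 := by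
      rw [Finset.card_erase_of_mem (Finset.mem_univ i), Finset.card_univ, Fintype.card_fin,
        Nat.cast_sub (by omega)]
      simp
    rw [h1, h2, hc] at h3
    have h4 : (n : ℝ) * x i ^ 2 ≤ n * ((n - 1) * d) ^ 2 := by nlinarith
    have h5 : x i ^ 2 ≤ ((n - 1) * d) ^ 2 := le_of_mul_le_mul_left h4 (by linarith)
    exact le_of_sq_le_sq h5 (mul_nonneg (by linarith) hd)
  have key : ∑ i, (x i ^ 3 + (2 * d - (n - 1) * d) * x i ^ 2
      + (d ^ 2 - 2 * d * ((n - 1) * d)) * x i - (n - 1) * d * d ^ 2) ≤ 0 := by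
    apply Finset.sum_nonpos
    intro i _
    have := mul_nonneg (sub_nonneg.2 (hle i)) (sq_nonneg (x i + d))
    nlinarith
  rw [Finset.sum_sub_distrib, Finset.sum_add_distrib, Finset.sum_add_distrib,
    ← Finset.mul_sum, ← Finset.mul_sum, h0, Finset.sum_const, Finset.card_univ,
    Fintype.card_fin, nsmul_eq_mul] at key
  have : (n : ℝ) * ((n - 1) * d * d ^ 2) = d * ∑ i, x i ^ 2 := by rw [hS]; ring
  rw [this] at key
  linarith

lemma trace_pow_eig (n : ℕ) (A : Matrix (Fin n) (Fin n) ℝ) (hA : A.IsHermitian) (k : ℕ) :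
    (A ^ k).trace = ∑ i, hA.eigenvalues i ^ k := by
  conv_lhs => rw [hA.spectral_theorem, ← map_pow, Unitary.conjStarAlgAut_apply,
    Matrix.trace_mul_comm, ← mul_assoc]
  simp [Matrix.diagonal_pow, Matrix.trace]

/-- Okumura's lemma for a real symmetric traceless matrix `Φ`:
`|tr(Φ³)| ≤ ((n-2)/√(n(n-1))) (tr(Φ²))^{3/2}`. -/
theorem okumura_matrix (n : ℕ) (hn : 2 ≤ n) (Φ : Matrix (Fin n) (Fin n) ℝ)
    (hsymm : Φ.IsSymm) (htr : Φ.trace = 0) :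
    |(Φ ^ 3).trace| ≤ (((n : ℝ) - 2) / Real.sqrt ((n : ℝ) * ((n : ℝ) - 1))) *
      ((Φ ^ 2).trace) ^ ((3 : ℝ) / 2) := by
  have hn' : (2 : ℝ) ≤ n := by exact_mod_cast hn
  have hA : Φ.IsHermitian := by
    rw [Matrix.IsHermitian, Matrix.conjTranspose_eq_transpose_of_trivial]
    exact hsymm
  have h1 := trace_pow_eig n Φ hA 1
  simp only [pow_one, htr] at h1
  rw [trace_pow_eig n Φ hA 3, trace_pow_eig n Φ hA 2]
  generalize hA.eigenvalues = x at *
  have hS0 : 0 ≤ ∑ i, x i ^ 2 := Finset.sum_nonneg fun i _ => sq_nonneg _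
  have hN : (0 : ℝ) < n * (n - 1) := mul_pos (by linarith) (by linarith)
  obtain ⟨d, hd⟩ : ∃ d, d = √(∑ i, x i ^ 2) / √((n : ℝ) * (n - 1)) := ⟨_, rfl⟩
  have hd0 : 0 ≤ d := by rw [hd]; positivity
  have hS : ∑ i, x i ^ 2 = n * (n - 1) * d ^ 2 := by
    rw [hd, div_pow, Real.sq_sqrt hS0, Real.sq_sqrt hN.le, mul_div_cancel₀ _ hN.ne']
  have hp : (∑ i, x i ^ 2) ^ ((3 : ℝ) / 2) = √(∑ i, x i ^ 2) * ∑ i, x i ^ 2 := by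
    rw [show (3 : ℝ) / 2 = 1 / 2 + 1 by norm_num,
      Real.rpow_add_of_nonneg hS0 (by norm_num) (by norm_num), Real.rpow_one, Real.sqrt_eq_rpow]
  have hR : ((n : ℝ) - 2) / √((n : ℝ) * (n - 1)) * (∑ i, x i ^ 2) ^ ((3 : ℝ) / 2)
      = ((n : ℝ) - 2) * d * ∑ i, x i ^ 2 := by
    rw [hp, hd]; ring
  rw [hR, abs_le]
  have u := okumura_upper n hn x h1.symm d hd0 hS
  have v := okumura_upper n hn (fun i => - x i) (by simp [← h1]) d hd0 (by simpa using hS)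
  have e3 : ∀ i, (- x i) ^ 3 = - x i ^ 3 := fun i => by ring
  simp only [e3, neg_sq, Finset.sum_neg_distrib] at v
  exact ⟨by linarith, u⟩
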